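/- arXiv:1910.03857 — 4 statements merged into one kernel-verified Lean document; each statement's English description precedes it below -/
import Mathlib

section
/- Fix a horizon T ∈ ℕ and, for each t ∈ {0,…,T}, a vector α_t = (α_t^0,…,α_t^t) ∈ [0,1]^{t+1}. Suppose there is a constant C_ρ ≥ 1 with π̃(a|s)/π(a|s) ≤ C_ρ for all s ∈ S, a ∈ A, and let ε = max_{s∈S, a∈A} |A^π(s,a)|. Define the random variable L̂_T(τ) = ∑_{t=0}^{T} γ^t ρ^{α_t}_{0:t}(τ) · A^π(s_t, a_t) on trajectories τ ∼ π. Then the variance satisfies Var_{τ∼π}(L̂_T) ≤ ((1 − γ^{T+1})/(1 − γ)) · ε² · ∑_{t=0}^{T} γ^t C_ρ^{2‖α_t‖₁}. -/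
open scoped BigOperators

namespace PolicyOpt

/-- A finite Markov decision process. -/
structure MDP (S A : Type*) [Fintype S] [Fintype A] where
  p : S → A → S → ℝ
  r : S → A → ℝ
  γ : ℝ
  μ0 : S → ℝ
  p_nonneg : ∀ s a s', 0 ≤ p s a s'
  p_sum_one : ∀ s a, ∑ s', p s a s' = 1
  μ0_nonneg : ∀ s, 0 ≤ μ0 s
  μ0_sum_one : ∑ s, μ0 s = 1
  γ_pos : 0 < γ
  γ_lt_one : γ < 1

variable {S A : Type*} [Fintype S] [Fintype A] [DecidableEq S] [DecidableEq A]

/-- A policy assigns to every state a probability distribution over actions. -/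
def IsPolicy (π : S → A → ℝ) : Prop :=
  (∀ s a, 0 ≤ π s a) ∧ ∀ s, ∑ a, π s a = 1

/-- Trajectory prefixes (histories) consisting of `t+1` state-action pairs. -/
abbrev Hist (S A : Type*) (t : ℕ) := Fin (t + 1) → S × A

/-- Probability of a history of length `t+1` when following policy `π`
starting from the initial distribution `μ0`. -/
noncomputable def prob (M : MDP S A) (π : S → A → ℝ) (t : ℕ) (h : Hist S A t) : ℝ :=
  (M.μ0 (h 0).1 * π (h 0).1 (h 0).2) *
    ∏ i : Fin t,
      (M.p (h i.castSucc).1 (h i.castSucc).2 (h i.succ).1 * π (h i.succ).1 (h i.succ).2)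

/-- Probability of a history of length `t+1` when following policy `π`,
conditioned on starting in state `s` with first action `a`. -/
noncomputable def probFrom (M : MDP S A) (π : S → A → ℝ) (s : S) (a : A) (t : ℕ) (h : Hist S A t) : ℝ :=
  (if h 0 = (s, a) then (1 : ℝ) else 0) *
    ∏ i : Fin t,
      (M.p (h i.castSucc).1 (h i.castSucc).2 (h i.succ).1 * π (h i.succ).1 (h i.succ).2)

/-- The last state-action pair of a history. -/
def lastSA {t : ℕ} (h : Hist S A t) : S × A := h (Fin.last t)

/-- State-action value `Q^π(s,a) = E_{τ∼π}[∑_{t≥0} γ^t r(s_t,a_t) | s₀=s, a₀=a]`. -/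
noncomputable def Qval (M : MDP S A) (π : S → A → ℝ) (s : S) (a : A) : ℝ :=
  ∑' t : ℕ, M.γ ^ t * ∑ h : Hist S A t, probFrom M π s a t h * M.r (lastSA h).1 (lastSA h).2

/-- State value `V^π(s)`. -/
noncomputable def Vval (M : MDP S A) (π : S → A → ℝ) (s : S) : ℝ :=
  ∑ a, π s a * Qval M π s a

/-- Advantage `A^π(s,a) = Q^π(s,a) - V^π(s)`. -/
noncomputable def Adv (M : MDP S A) (π : S → A → ℝ) (s : S) (a : A) : ℝ :=
  Qval M π s a - Vval M π s

/-- The value `η(π) = E_{τ∼π} ∑_{t≥0} γ^t r(s_t,a_t)`. -/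
noncomputable def ηval (M : MDP S A) (π : S → A → ℝ) : ℝ :=
  ∑' t : ℕ, M.γ ^ t * ∑ h : Hist S A t, prob M π t h * M.r (lastSA h).1 (lastSA h).2

/-- Normalised discounted state occupancy measure
`d^π(s) = (1-γ) ∑_{t≥0} γ^t Pr_{τ∼π}(s_t = s)`. -/
noncomputable def dOcc (M : MDP S A) (π : S → A → ℝ) (s : S) : ℝ :=
  (1 - M.γ) * ∑' t : ℕ, M.γ ^ t *
    ∑ h : Hist S A t, prob M π t h * (if (lastSA h).1 = s then (1 : ℝ) else 0)

/-- The surrogate objective `L_π(π') = (1/(1-γ)) ∑_s d^π(s) ∑_a π'(a|s) A^π(s,a)`. -/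
noncomputable def Lsur (M : MDP S A) (π π' : S → A → ℝ) : ℝ :=
  (1 - M.γ)⁻¹ * ∑ s, dOcc M π s * ∑ a, π' s a * Adv M π s a

/-- Product of importance sampling ratios `ρ_{0:t}` along a history. -/
noncomputable def ρprod (π π' : S → A → ℝ) {t : ℕ} (h : Hist S A t) : ℝ :=
  ∏ i, π' (h i).1 (h i).2 / π (h i).1 (h i).2

/-- Smoothed product of importance sampling ratios `ρ^{α}_{0:t}`. -/
noncomputable def ρpow (π π' : S → A → ℝ) {t : ℕ} (α : Fin (t + 1) → ℝ) (h : Hist S A t) : ℝ :=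
  ∏ i, (π' (h i).1 (h i).2 / π (h i).1 (h i).2) ^ (α i)

/-- The prefix of length `t+1` of a history of length `T+1` (for `t ≤ T`). -/
def pref {T : ℕ} (h : Hist S A T) (t : Fin (T + 1)) : Hist S A (t : ℕ) :=
  fun i => h (Fin.castLE t.isLt i)

/-!
The variance is at most the second moment, and the second moment is at most any pointwise bound on
the square of the estimator, because the trajectory prefixes form a probability space. Pointwise,
Cauchy–Schwarz with the weights `γ ^ t` splits off the factor `∑ γ ^ t` and leaves
`∑ γ ^ t ρ_t² f_t²`, where each smoothed ratio satisfies `ρ_t ≤ C ^ ‖α_t‖₁`.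
-/

section FiniteSums

variable {ι R : Type*}

theorem sq_sum_mul_le_sum_mul_sum_mul_sq [CommRing R] [LinearOrder R] [IsStrictOrderedRing R]
    (s : Finset ι) {w : ι → R} (x : ι → R) (hw : ∀ i ∈ s, 0 ≤ w i) :
    (∑ i ∈ s, w i * x i) ^ 2 ≤ (∑ i ∈ s, w i) * ∑ i ∈ s, w i * x i ^ 2 :=
  Finset.sum_sq_le_sum_mul_sum_of_sq_le_mul s hw
    (fun i hi => mul_nonneg (hw i hi) (sq_nonneg _)) (fun i _ => (by ring : _ = _).le)

theorem sum_mul_sq_sub_sq_sum_mul_le [CommRing R] [LinearOrder R] [IsStrictOrderedRing R]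
    {s : Finset ι} {w x : ι → R} {K : R} (hw : ∀ i ∈ s, 0 ≤ w i) (hw_sum : ∑ i ∈ s, w i = 1)
    (hx : ∀ i ∈ s, x i ^ 2 ≤ K) :
    ∑ i ∈ s, w i * x i ^ 2 - (∑ i ∈ s, w i * x i) ^ 2 ≤ K :=
  calc
    _ ≤ ∑ i ∈ s, w i * x i ^ 2 := sub_le_self _ (sq_nonneg _)
    _ ≤ ∑ i ∈ s, w i * K :=
      Finset.sum_le_sum fun i hi => mul_le_mul_of_nonneg_left (hx i hi) (hw i hi)
    _ = K := by rw [← Finset.sum_mul, hw_sum, one_mul]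

theorem prod_rpow_le_rpow_sum {s : Finset ι} {x a : ι → ℝ} {C : ℝ} (hC : 0 ≤ C)
    (hx : ∀ i ∈ s, 0 ≤ x i) (hxC : ∀ i ∈ s, x i ≤ C) (ha : ∀ i ∈ s, 0 ≤ a i) :
    ∏ i ∈ s, x i ^ a i ≤ C ^ ∑ i ∈ s, a i := by
  rw [Real.rpow_sum_of_nonneg hC ha]
  exact Finset.prod_le_prod (fun i hi => Real.rpow_nonneg (hx i hi) _)
    fun i hi => Real.rpow_le_rpow (hx i hi) (hxC i hi) (ha i hi)

theorem sum_mul_prod_transition_eq_sum [CommSemiring R] [Fintype ι] (ν : ι → R) {K : ι → ι → R}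
    (hK : ∀ x, ∑ y, K x y = 1) (n : ℕ) :
    ∑ h : Fin (n + 1) → ι, ν (h 0) * ∏ i : Fin n, K (h i.castSucc) (h i.succ) = ∑ x, ν x := by
  induction n generalizing ν with
  | zero => simp [← (Equiv.funUnique (Fin 1) ι).symm.sum_comp]
  | succ n ih =>
    calc
      _ = ∑ h : Fin (n + 1) → ι, (∑ x, ν x * K x (h 0)) *
            ∏ i : Fin n, K (h i.castSucc) (h i.succ) := by
        rw [← (Fin.consEquiv fun _ => ι).sum_comp, Fintype.sum_prod_type_right]
        simp [Fin.prod_univ_succ, Finset.sum_mul, mul_assoc, Fin.consEquiv]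
      _ = ∑ y, ∑ x, ν x * K x y := ih fun y => ∑ x, ν x * K x y
      _ = ∑ x, ν x := by
        rw [Finset.sum_comm]
        simp only [← Finset.mul_sum, hK, mul_one]

end FiniteSums

section Histories

omit [DecidableEq S] [DecidableEq A]

variable (M : MDP S A) {π : S → A → ℝ}

theorem prob_nonneg (hπ : ∀ s a, 0 ≤ π s a) {T : ℕ} (h : Hist S A T) : 0 ≤ prob M π T h :=
  mul_nonneg (mul_nonneg (M.μ0_nonneg _) (hπ _ _))
    (Finset.prod_nonneg fun _ _ => mul_nonneg (M.p_nonneg _ _ _) (hπ _ _))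

theorem sum_mul_policy_eq_sum (hπ : ∀ s, ∑ a, π s a = 1) (ν : S → ℝ) :
    ∑ q : S × A, ν q.1 * π q.1 q.2 = ∑ s, ν s := by
  simp only [Fintype.sum_prod_type, ← Finset.mul_sum, hπ, mul_one]

theorem sum_prob_eq_one (hπ : ∀ s, ∑ a, π s a = 1) (T : ℕ) : ∑ h, prob M π T h = 1 :=
  calc
    _ = ∑ q : S × A, M.μ0 q.1 * π q.1 q.2 :=
      sum_mul_prod_transition_eq_sum (fun q : S × A => M.μ0 q.1 * π q.1 q.2)
        (K := fun q q' => M.p q.1 q.2 q'.1 * π q'.1 q'.2)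
        (fun q => (sum_mul_policy_eq_sum hπ _).trans (M.p_sum_one q.1 q.2)) T
    _ = 1 := (sum_mul_policy_eq_sum hπ _).trans M.μ0_sum_one

end Histories

section Estimator

omit [Fintype S] [Fintype A] [DecidableEq S] [DecidableEq A]

/-- The smoothed importance-sampling estimator `∑_{t ≤ T} γ^t ρ^{α_t}_{0:t} f(s_t, a_t)` along a
history. The advantage is replaced by an arbitrary function `f` of the state-action pair, and the
discount factor `γ` need not be that of an MDP. -/
noncomputable def smoothedEstimator (γ : ℝ) (π π' f : S → A → ℝ) (α : (t : ℕ) → Fin (t + 1) → ℝ)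
    {T : ℕ} (h : Hist S A T) : ℝ :=
  ∑ t : Fin (T + 1), γ ^ (t : ℕ) * ρpow π π' (α t) (pref h t) * f (h t).1 (h t).2

variable {π π' f : S → A → ℝ} {C : ℝ}

theorem ρpow_nonneg (hπ : ∀ s a, 0 ≤ π s a) (hπ' : ∀ s a, 0 ≤ π' s a) {t : ℕ}
    (α : Fin (t + 1) → ℝ) (h : Hist S A t) : 0 ≤ ρpow π π' α h :=
  Finset.prod_nonneg fun _ _ => Real.rpow_nonneg (div_nonneg (hπ' _ _) (hπ _ _)) _

theorem ρpow_sq_le (hπ : ∀ s a, 0 ≤ π s a) (hπ' : ∀ s a, 0 ≤ π' s a)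
    (hratio : ∀ s a, π' s a / π s a ≤ C) {t : ℕ} {α : Fin (t + 1) → ℝ} (hα : ∀ i, 0 ≤ α i)
    (h : Hist S A t) : ρpow π π' α h ^ 2 ≤ C ^ (2 * ∑ i, α i) := by
  have hratio_nonneg (s : S) (a : A) : 0 ≤ π' s a / π s a := div_nonneg (hπ' s a) (hπ s a)
  have hC : 0 ≤ C := (hratio_nonneg (h 0).1 (h 0).2).trans (hratio _ _)
  calc
    ρpow π π' α h ^ 2 ≤ (C ^ ∑ i, α i) ^ 2 :=
      pow_le_pow_left₀ (ρpow_nonneg hπ hπ' α h)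
        (prod_rpow_le_rpow_sum hC (fun _ _ => hratio_nonneg _ _) (fun _ _ => hratio _ _)
          fun i _ => hα i) 2
    _ = C ^ (2 * ∑ i, α i) := by rw [mul_comm, Real.rpow_mul hC, Real.rpow_two]

theorem smoothedEstimator_sq_le {γ : ℝ} (hγ : 0 ≤ γ) (hπ : ∀ s a, 0 ≤ π s a)
    (hπ' : ∀ s a, 0 ≤ π' s a) (hratio : ∀ s a, π' s a / π s a ≤ C) {ε : ℝ}
    (hf : ∀ s a, |f s a| ≤ ε) {α : (t : ℕ) → Fin (t + 1) → ℝ} (hα : ∀ t i, 0 ≤ α t i)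
    {T : ℕ} (h : Hist S A T) :
    smoothedEstimator γ π π' f α h ^ 2 ≤
      (∑ t : Fin (T + 1), γ ^ (t : ℕ)) * ε ^ 2 *
        ∑ t : Fin (T + 1), γ ^ (t : ℕ) * C ^ (2 * ∑ i, α t i) := by
  have hterm (t : Fin (T + 1)) :
      (ρpow π π' (α t) (pref h t) * f (h t).1 (h t).2) ^ 2 ≤
        C ^ (2 * ∑ i, α t i) * ε ^ 2 := by
    have hρ := ρpow_sq_le hπ hπ' hratio (hα t) (pref h t)
    rw [mul_pow]
    exact mul_le_mul hρ (sq_le_sq.2 ((hf _ _).trans (le_abs_self ε)))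
      (sq_nonneg _) ((sq_nonneg _).trans hρ)
  calc
    smoothedEstimator γ π π' f α h ^ 2
      = (∑ t : Fin (T + 1),
          γ ^ (t : ℕ) * (ρpow π π' (α t) (pref h t) * f (h t).1 (h t).2)) ^ 2 := by
        simp only [smoothedEstimator, mul_assoc]
    _ ≤ (∑ t : Fin (T + 1), γ ^ (t : ℕ)) * ∑ t : Fin (T + 1),
          γ ^ (t : ℕ) * (ρpow π π' (α t) (pref h t) * f (h t).1 (h t).2) ^ 2 :=
        sq_sum_mul_le_sum_mul_sum_mul_sq _ _ fun _ _ => pow_nonneg hγ _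
    _ ≤ (∑ t : Fin (T + 1), γ ^ (t : ℕ)) * ∑ t : Fin (T + 1),
          γ ^ (t : ℕ) * (C ^ (2 * ∑ i, α t i) * ε ^ 2) := by
        gcongr with t
        exact hterm t
    _ = (∑ t : Fin (T + 1), γ ^ (t : ℕ)) * ε ^ 2 *
          ∑ t : Fin (T + 1), γ ^ (t : ℕ) * C ^ (2 * ∑ i, α t i) := by
        simp only [← mul_assoc, ← Finset.sum_mul]
        ring

end Estimator

omit [DecidableEq S] [DecidableEq A] in
theorem variance_bound_smoothed_IS_general (M : MDP S A) {γ : ℝ} (hγ : 0 ≤ γ) (hγ_ne : γ ≠ 1)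
    {π π' f : S → A → ℝ} (hπ : IsPolicy π) (hπpos : ∀ s a, 0 < π s a) (hπ' : ∀ s a, 0 ≤ π' s a)
    {C : ℝ} (hratio : ∀ s a, π' s a / π s a ≤ C) {ε : ℝ} (hf : ∀ s a, |f s a| ≤ ε)
    {α : (t : ℕ) → Fin (t + 1) → ℝ} (hα : ∀ t i, 0 ≤ α t i) (T : ℕ) :
    ∑ h : Hist S A T, prob M π T h * smoothedEstimator γ π π' f α h ^ 2 -
        (∑ h : Hist S A T, prob M π T h * smoothedEstimator γ π π' f α h) ^ 2 ≤
      (1 - γ ^ (T + 1)) / (1 - γ) * ε ^ 2 *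
        ∑ t : Fin (T + 1), γ ^ (t : ℕ) * C ^ (2 * ∑ i, α t i) := by
  have hπ_nonneg (s : S) (a : A) : 0 ≤ π s a := (hπpos s a).le
  have hgeom : (1 - γ ^ (T + 1)) / (1 - γ) = ∑ t : Fin (T + 1), γ ^ (t : ℕ) := by
    rw [Fin.sum_univ_eq_sum_range (γ ^ ·), div_eq_iff (sub_ne_zero.2 hγ_ne.symm),
      geom_sum_mul_neg]
  rw [hgeom]
  exact sum_mul_sq_sub_sq_sum_mul_le (fun h _ => prob_nonneg M hπ_nonneg h)
    (sum_prob_eq_one M hπ.2 T)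
    fun h _ => smoothedEstimator_sq_le hγ hπ_nonneg hπ' hratio hf hα h

/-- Variance bound for the truncated smoothed importance-sampling estimator. -/
theorem variance_bound_smoothed_IS
    [Nonempty S] [Nonempty A]
    (M : MDP S A) (π π' : S → A → ℝ)
    (hπ : IsPolicy π) (hπ' : IsPolicy π')
    (hπpos : ∀ s a, 0 < π s a)
    (Cρ : ℝ) (hCρ : 1 ≤ Cρ) (hratio : ∀ s a, π' s a / π s a ≤ Cρ)
    (ε : ℝ)
    (hε : ε = Finset.univ.sup' Finset.univ_nonempty fun q : S × A => |Adv M π q.1 q.2|)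
    (α : (t : ℕ) → Fin (t + 1) → ℝ) (hα : ∀ t i, α t i ∈ Set.Icc (0 : ℝ) 1)
    (T : ℕ) :
    (∑ h : Hist S A T, prob M π T h *
        (∑ t : Fin (T + 1),
          M.γ ^ (t : ℕ) * ρpow π π' (α t) (pref h t) * Adv M π (h t).1 (h t).2) ^ 2) -
      (∑ h : Hist S A T, prob M π T h *
        ∑ t : Fin (T + 1),
          M.γ ^ (t : ℕ) * ρpow π π' (α t) (pref h t) * Adv M π (h t).1 (h t).2) ^ 2 ≤
      ((1 - M.γ ^ (T + 1)) / (1 - M.γ)) * ε ^ 2 *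
        ∑ t : Fin (T + 1), M.γ ^ (t : ℕ) * Cρ ^ (2 * ∑ i, |α t i|) := by
  have hAdv (s : S) (a : A) : |Adv M π s a| ≤ ε :=
    hε ▸ Finset.le_sup' (fun q : S × A => |Adv M π q.1 q.2|) (Finset.mem_univ (s, a))
  simpa only [smoothedEstimator, abs_of_nonneg (hα _ _).1] using
    variance_bound_smoothed_IS_general M M.γ_pos.le M.γ_lt_one.ne hπ hπpos hπ'.1 hratio hAdv
      (fun t i => (hα t i).1) T

end PolicyOpt
end

section
/- Assume π(a|s) > 0 and π̃(a|s) > 0 for all (s,a), and suppose there are constants C^∂ > 0, C_δ > 0, C^γ > 0 and vectors g(s,a) ∈ ℝ^d such that ‖g(s,a)‖₂ ≤ C^∂ and π(a|s)/π̃(a|s) ≤ C_δ for all (s,a), and such that for every trajectory τ and every T ∈ ℕ, ∑_{t=0}^{T} γ^t (ρ^{α_t}_{0:t}(τ))² ≤ C^γ. Let ε = max_{s,a} |A^π(s,a)| and define the ℝ^d-valued random vector G_T(τ) = ∑_{t=0}^{T} γ^t ρ^{α_t}_{0:t}(τ) (∑_{i=0}^{t} α_t^i · (π(a_i|s_i)/π̃(a_i|s_i))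 · g(s_i,a_i)) · A^π(s_t,a_t) on trajectories τ ∼ π. Then for every T ∈ ℕ, tr Cov_{τ∼π}(G_T) ≤ ε² (C^∂)² C_δ² C^γ · ∑_{t=0}^{T} γ^t ‖α_t‖₁², where tr Cov(G) = E‖G‖₂² − ‖E G‖₂². -/
/-!
Since `tr Cov G = E‖G‖² - ‖E G‖² ≤ E‖G‖²`, it suffices to bound `‖G_T(τ)‖²` uniformly over
trajectories. Splitting the weight `γ ^ t` evenly between the two factors, Cauchy–Schwarz gives
`‖G_T‖² ≤ (∑ γ ^ t ρ_t²) (∑ γ ^ t ‖v_t‖²)`, where `ρ_t` is the smoothed importance ratio and `v_t`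
collects the remaining factors. The first sum is at most `C^γ` by hypothesis, and
`‖v_t‖ ≤ ε C_δ C^∂ ‖α_t‖₁` by the triangle inequality.
-/

open scoped BigOperators

namespace PolicyOpt

variable {S A : Type*} [Fintype S] [Fintype A] [DecidableEq S] [DecidableEq A]

section SimplexWeights

variable {R X Y : Type*} [CommSemiring R]

/-- The weight of the path `x 0, …, x n` under the Markov chain on `X` with initial distribution `μ`
and transition matrix `K`. -/
def pathWeight (μ : X → R) (K : X → X → R) (n : ℕ) (x : Fin (n + 1) → X) : R :=
  μ (x 0) * ∏ i : Fin n, K (x i.castSucc) (x i.succ)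

lemma pathWeight_snoc (μ : X → R) (K : X → X → R) (n : ℕ) (x : Fin (n + 1) → X) (y : X) :
    pathWeight μ K (n + 1) (Fin.snoc (α := fun _ => X) x y) =
      pathWeight μ K n x * K (x (Fin.last n)) y := by
  have snoc_zero : Fin.snoc (α := fun _ => X) x y 0 = x 0 := by
    rw [← Fin.castSucc_zero, Fin.snoc_castSucc]
  simp only [pathWeight, Fin.prod_univ_castSucc, snoc_zero, Fin.succ_castSucc, Fin.snoc_castSucc,
    Fin.succ_last, Fin.snoc_last, mul_assoc]

lemma sum_pathWeight [Fintype X] (μ : X → R) {K : X → X → R} (hK : ∀ x, ∑ y, K x y = 1) (n : ℕ) :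
    ∑ x, pathWeight μ K n x = ∑ x, μ x := by
  induction n with
  | zero =>
    rw [← (Equiv.funUnique (Fin 1) X).symm.sum_comp]
    simp [pathWeight]
  | succ n ih =>
    calc ∑ x, pathWeight μ K (n + 1) x
        = ∑ x, ∑ y, pathWeight μ K (n + 1) (Fin.snoc (α := fun _ => X) x y) := by
          rw [← (Fin.snocEquiv fun _ => X).sum_comp, Fintype.sum_prod_type_right]
          rfl
      _ = ∑ x, pathWeight μ K n x := by
          simp only [pathWeight_snoc, ← Finset.mul_sum, hK, mul_one]
      _ = ∑ x, μ x := ih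

variable [PartialOrder R] [IsOrderedRing R] [Fintype X]

lemma pathWeight_mem_stdSimplex {μ : X → R} {K : X → X → R} (hμ : μ ∈ stdSimplex R X)
    (hK : ∀ x, K x ∈ stdSimplex R X) (n : ℕ) :
    pathWeight μ K n ∈ stdSimplex R (Fin (n + 1) → X) :=
  ⟨fun _ => mul_nonneg (hμ.1 _) (Finset.prod_nonneg fun _ _ => (hK _).1 _),
    (sum_pathWeight μ (fun x => (hK x).2) n).trans hμ.2⟩

lemma joint_mem_stdSimplex [Fintype Y] {μ : X → R} {κ : X → Y → R} (hμ : μ ∈ stdSimplex R X)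
    (hκ : ∀ x, κ x ∈ stdSimplex R Y) :
    (fun z : X × Y => μ z.1 * κ z.1 z.2) ∈ stdSimplex R (X × Y) := by
  refine ⟨fun z => mul_nonneg (hμ.1 _) ((hκ _).1 _), ?_⟩
  simp only [Fintype.sum_prod_type, ← Finset.mul_sum, (hκ _).2, mul_one, hμ.2]

end SimplexWeights

section NormBounds

variable {ι E : Type*} [SeminormedAddCommGroup E] [NormedSpace ℝ E]

lemma norm_sum_smul_le_sum_abs_mul (s : Finset ι) (a : ι → ℝ) {v : ι → E} {C : ℝ}
    (hv : ∀ i ∈ s, ‖v i‖ ≤ C) : ‖∑ i ∈ s, a i • v i‖ ≤ (∑ i ∈ s, |a i|) * C := by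
  rw [Finset.sum_mul]
  refine norm_sum_le_of_le s fun i hi => ?_
  rw [norm_smul, Real.norm_eq_abs]
  exact mul_le_mul_of_nonneg_left (hv i hi) (abs_nonneg _)

lemma norm_sum_mul_smul_sq_le (s : Finset ι) {w : ι → ℝ} (hw : ∀ i ∈ s, 0 ≤ w i) (a : ι → ℝ)
    (v : ι → E) :
    ‖∑ i ∈ s, (w i * a i) • v i‖ ^ 2 ≤
      (∑ i ∈ s, w i * a i ^ 2) * ∑ i ∈ s, w i * ‖v i‖ ^ 2 := by
  calc ‖∑ i ∈ s, (w i * a i) • v i‖ ^ 2 ≤ (∑ i ∈ s, ‖(w i * a i) • v i‖) ^ 2 := by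
        gcongr
        exact norm_sum_le _ _
    _ ≤ (∑ i ∈ s, w i * a i ^ 2) * ∑ i ∈ s, w i * ‖v i‖ ^ 2 := by
        refine Finset.sum_sq_le_sum_mul_sum_of_sq_le_mul s
          (fun i hi => mul_nonneg (hw i hi) (sq_nonneg _))
          (fun i hi => mul_nonneg (hw i hi) (sq_nonneg _)) fun i _ => le_of_eq ?_
        rw [norm_smul, Real.norm_eq_abs, mul_pow, sq_abs]
        ring

/-- The trace `E‖G‖² - ‖E G‖²` of the covariance of a random vector `G` on a finite probability
space with point masses `p`. This form makes sense in any seminormed space. -/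
noncomputable def trCov {Ω : Type*} [Fintype Ω] (p : Ω → ℝ) (G : Ω → E) : ℝ :=
  ∑ ω, p ω * ‖G ω‖ ^ 2 - ‖∑ ω, p ω • G ω‖ ^ 2

lemma trCov_le_of_norm_sq_le {Ω : Type*} [Fintype Ω] {p : Ω → ℝ} (hp : p ∈ stdSimplex ℝ Ω)
    {G : Ω → E} {C : ℝ} (hG : ∀ ω, ‖G ω‖ ^ 2 ≤ C) : trCov p G ≤ C := by
  calc trCov p G ≤ ∑ ω, p ω * ‖G ω‖ ^ 2 := sub_le_self _ (sq_nonneg _)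
    _ ≤ ∑ ω, p ω * C := Finset.sum_le_sum fun ω _ => mul_le_mul_of_nonneg_left (hG ω) (hp.1 ω)
    _ = C := by rw [← Finset.sum_mul, hp.2, one_mul]

end NormBounds

section SmoothedGradient

omit [DecidableEq S] [DecidableEq A]

lemma prob_mem_stdSimplex (M : MDP S A) {π : S → A → ℝ} (hπ : IsPolicy π) (T : ℕ) :
    prob M π T ∈ stdSimplex ℝ (Hist S A T) := by
  have hπs (s : S) : π s ∈ stdSimplex ℝ A := ⟨hπ.1 s, hπ.2 s⟩
  exact pathWeight_mem_stdSimplex (joint_mem_stdSimplex ⟨M.μ0_nonneg, M.μ0_sum_one⟩ hπs)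
    (fun x => joint_mem_stdSimplex ⟨M.p_nonneg x.1 x.2, M.p_sum_one x.1 x.2⟩ hπs) T

variable {E : Type*} [SeminormedAddCommGroup E] [NormedSpace ℝ E]
  {π π' : S → A → ℝ} {g : S → A → E} {Cpar Cdelta : ℝ}

section PointwiseBounds

omit [Fintype S] [Fintype A]

/-- The smoothed score, the factor that multiplies `ρ^α_{0:t}` in the gradient of the smoothed
importance-sampling objective; `g` stands for the policy gradients. -/
noncomputable def smoothedScore (π π' : S → A → ℝ) (g : S → A → E) {t : ℕ} (α : Fin (t + 1) → ℝ)
    (h : Hist S A t) : E :=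
  ∑ i, (α i * (π (h i).1 (h i).2 / π' (h i).1 (h i).2)) • g (h i).1 (h i).2

/-- The gradient `G_T` of the truncated smoothed importance-sampling objective along a history,
with an arbitrary function `f` in place of the advantage `A^π`. -/
noncomputable def smoothedISGradient (γ : ℝ) (π π' : S → A → ℝ) (g : S → A → E)
    (α : (t : ℕ) → Fin (t + 1) → ℝ) (f : S → A → ℝ) {T : ℕ} (h : Hist S A T) : E :=
  ∑ t : Fin (T + 1), (γ ^ (t : ℕ) * ρpow π π' (α t) (pref h t) * f (h t).1 (h t).2) •
    smoothedScore π π' g (α t) (pref h t)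

lemma norm_smoothedScore_le (hπpos : ∀ s a, 0 < π s a) (hπ'pos : ∀ s a, 0 < π' s a)
    (hg : ∀ s a, ‖g s a‖ ≤ Cpar) (hratio : ∀ s a, π s a / π' s a ≤ Cdelta)
    {t : ℕ} (α : Fin (t + 1) → ℝ) (h : Hist S A t) :
    ‖smoothedScore π π' g α h‖ ≤ (∑ i, |α i|) * (Cdelta * Cpar) := by
  have norm_ratio_smul_le (s : S) (a : A) : ‖(π s a / π' s a) • g s a‖ ≤ Cdelta * Cpar := by
    have ratio_pos : 0 < π s a / π' s a := div_pos (hπpos s a) (hπ'pos s a)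
    rw [norm_smul, Real.norm_of_nonneg ratio_pos.le]
    exact mul_le_mul (hratio s a) (hg s a) (norm_nonneg _) (ratio_pos.le.trans (hratio s a))
  simp only [smoothedScore, mul_smul]
  exact norm_sum_smul_le_sum_abs_mul _ α fun i _ => norm_ratio_smul_le _ _

lemma norm_smoothedISGradient_sq_le {γ : ℝ} (hγ : 0 ≤ γ) (hπpos : ∀ s a, 0 < π s a)
    (hπ'pos : ∀ s a, 0 < π' s a) (hg : ∀ s a, ‖g s a‖ ≤ Cpar)
    (hratio : ∀ s a, π s a / π' s a ≤ Cdelta) (α : (t : ℕ) → Fin (t + 1) → ℝ)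
    {f : S → A → ℝ} {ε : ℝ} (hf : ∀ s a, |f s a| ≤ ε) {T : ℕ} (h : Hist S A T) :
    ‖smoothedISGradient γ π π' g α f h‖ ^ 2 ≤
      (∑ t : Fin (T + 1), γ ^ (t : ℕ) * ρpow π π' (α t) (pref h t) ^ 2) *
        (ε ^ 2 * Cpar ^ 2 * Cdelta ^ 2 *
          ∑ t : Fin (T + 1), γ ^ (t : ℕ) * (∑ i, |α t i|) ^ 2) := by
  let v (t : Fin (T + 1)) : E := f (h t).1 (h t).2 • smoothedScore π π' g (α t) (pref h t)
  have norm_v_le (t : Fin (T + 1)) : ‖v t‖ ≤ ε * ((∑ i, |α t i|) * (Cdelta * Cpar)) := by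
    rw [norm_smul, Real.norm_eq_abs]
    exact mul_le_mul (hf _ _) (norm_smoothedScore_le hπpos hπ'pos hg hratio (α t) (pref h t))
      (norm_nonneg _) ((abs_nonneg _).trans (hf (h t).1 (h t).2))
  calc ‖smoothedISGradient γ π π' g α f h‖ ^ 2
      = ‖∑ t : Fin (T + 1), (γ ^ (t : ℕ) * ρpow π π' (α t) (pref h t)) • v t‖ ^ 2 := by
        simp only [smoothedISGradient, v, mul_smul]
    _ ≤ (∑ t : Fin (T + 1), γ ^ (t : ℕ) * ρpow π π' (α t) (pref h t) ^ 2) *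
          ∑ t : Fin (T + 1), γ ^ (t : ℕ) * ‖v t‖ ^ 2 :=
        norm_sum_mul_smul_sq_le _ (fun t _ => pow_nonneg hγ _) _ v
    _ ≤ (∑ t : Fin (T + 1), γ ^ (t : ℕ) * ρpow π π' (α t) (pref h t) ^ 2) *
          ∑ t : Fin (T + 1), γ ^ (t : ℕ) * (ε * ((∑ i, |α t i|) * (Cdelta * Cpar))) ^ 2 := by
        gcongr with t
        exact norm_v_le t
    _ = _ := by
        congr 1
        rw [Finset.mul_sum]
        exact Finset.sum_congr rfl fun t _ => by ring

end PointwiseBounds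

theorem trace_covariance_bound_smoothed_IS_gradient_general (M : MDP S A) (hπ : IsPolicy π)
    (hπpos : ∀ s a, 0 < π s a) (hπ'pos : ∀ s a, 0 < π' s a) (hg : ∀ s a, ‖g s a‖ ≤ Cpar)
    (hratio : ∀ s a, π s a / π' s a ≤ Cdelta) (α : (t : ℕ) → Fin (t + 1) → ℝ)
    {f : S → A → ℝ} {ε : ℝ} (hf : ∀ s a, |f s a| ≤ ε) {T : ℕ} {Cgam : ℝ}
    (hgam : ∀ h : Hist S A T,
      ∑ t : Fin (T + 1), M.γ ^ (t : ℕ) * ρpow π π' (α t) (pref h t) ^ 2 ≤ Cgam) :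
    trCov (prob M π T) (smoothedISGradient M.γ π π' g α f) ≤
      ε ^ 2 * Cpar ^ 2 * Cdelta ^ 2 * Cgam *
        ∑ t : Fin (T + 1), M.γ ^ (t : ℕ) * (∑ i, |α t i|) ^ 2 := by
  have hγ : 0 ≤ M.γ := M.γ_pos.le
  refine trCov_le_of_norm_sq_le (prob_mem_stdSimplex M hπ T) fun h => ?_
  calc ‖smoothedISGradient M.γ π π' g α f h‖ ^ 2
      ≤ (∑ t : Fin (T + 1), M.γ ^ (t : ℕ) * ρpow π π' (α t) (pref h t) ^ 2) *
          (ε ^ 2 * Cpar ^ 2 * Cdelta ^ 2 *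
            ∑ t : Fin (T + 1), M.γ ^ (t : ℕ) * (∑ i, |α t i|) ^ 2) :=
        norm_smoothedISGradient_sq_le hγ hπpos hπ'pos hg hratio α hf h
    _ ≤ Cgam * (ε ^ 2 * Cpar ^ 2 * Cdelta ^ 2 *
          ∑ t : Fin (T + 1), M.γ ^ (t : ℕ) * (∑ i, |α t i|) ^ 2) := by
        gcongr
        exact hgam h
    _ = _ := by ring

end SmoothedGradient

/-- Bound on the trace of the covariance of the gradient of the truncated
smoothed importance-sampling objective. -/
theorem trace_covariance_bound_smoothed_IS_gradient
    [Nonempty S] [Nonempty A]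
    (M : MDP S A) (π π' : S → A → ℝ)
    (hπ : IsPolicy π) (hπ' : IsPolicy π')
    (hπpos : ∀ s a, 0 < π s a) (hπ'pos : ∀ s a, 0 < π' s a)
    (d : ℕ) (g : S → A → EuclideanSpace ℝ (Fin d))
    (Cpar Cdelta Cgam : ℝ)
    (hCpar : 0 < Cpar) (hCdelta : 0 < Cdelta) (hCgam : 0 < Cgam)
    (hg : ∀ s a, ‖g s a‖ ≤ Cpar)
    (hratio : ∀ s a, π s a / π' s a ≤ Cdelta)
    (α : (t : ℕ) → Fin (t + 1) → ℝ) (hα : ∀ t i, α t i ∈ Set.Icc (0 : ℝ) 1)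
    (hgam : ∀ (T : ℕ) (h : Hist S A T),
      ∑ t : Fin (T + 1), M.γ ^ (t : ℕ) * (ρpow π π' (α t) (pref h t)) ^ 2 ≤ Cgam)
    (ε : ℝ)
    (hε : ε = Finset.univ.sup' Finset.univ_nonempty fun q : S × A => |Adv M π q.1 q.2|)
    (T : ℕ) :
    (∑ h : Hist S A T, prob M π T h *
        ‖∑ t : Fin (T + 1),
            (M.γ ^ (t : ℕ) * ρpow π π' (α t) (pref h t) * Adv M π (h t).1 (h t).2) •
              ∑ i, (α t i *
                  (π (pref h t i).1 (pref h t i).2 / π' (pref h t i).1 (pref h t i).2)) •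
                g (pref h t i).1 (pref h t i).2‖ ^ 2) -
      ‖∑ h : Hist S A T, prob M π T h •
          ∑ t : Fin (T + 1),
            (M.γ ^ (t : ℕ) * ρpow π π' (α t) (pref h t) * Adv M π (h t).1 (h t).2) •
              ∑ i, (α t i *
                  (π (pref h t i).1 (pref h t i).2 / π' (pref h t i).1 (pref h t i).2)) •
                g (pref h t i).1 (pref h t i).2‖ ^ 2 ≤
      ε ^ 2 * Cpar ^ 2 * Cdelta ^ 2 * Cgam *
        ∑ t : Fin (T + 1), M.γ ^ (t : ℕ) * (∑ i, |α t i|) ^ 2 := by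
  have hAdv (s : S) (a : A) : |Adv M π s a| ≤ ε :=
    hε ▸ Finset.le_sup' (fun q : S × A => |Adv M π q.1 q.2|) (Finset.mem_univ (s, a))
  exact trace_covariance_bound_smoothed_IS_gradient_general M hπ hπpos hπ'pos hg hratio α hAdv
    (hgam T)

end PolicyOpt
end

section
/- For any two policies π and π̃, η(π̃) − η(π) = L_π(π̃) + (1/(1−γ)) · ∑_{s∈S} d^π(s) ∑_{a∈A} (Q^{π̃}(s,a) − Q^π(s,a)) · (π̃(a|s) − π(a|s)). -/
/-!
On state-action pairs a policy `π` defines a stochastic matrix `P`, and discounted sums along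
trajectories are pairings against the resolvent `(1 - γ P)⁻¹ = ∑ γ ^ t P ^ t`. Since `P` sends a
function of the state to an expression which does not involve `π`, the Bellman equation of another
policy `π'` reads `A^{π'} = r - (1 - γ P) V^{π'}`. Applying the resolvent of `π` gives the
performance difference `η(π) - η(π') = (1 - γ)⁻¹ ∑ d^π(s) π(a|s) A^{π'}(s, a)`. The two sums over
actions in the decomposition add up, state by state, to `-∑ π(a|s) A^{π'}(s, a)`.
-/

open scoped BigOperators

namespace PolicyOpt

variable {S A : Type*} [Fintype S] [Fintype A] [DecidableEq S] [DecidableEq A]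

open Matrix
open Function (uncurry uncurry_apply_pair)
open scoped Matrix.Norms.Operator

section Paths

variable {n R : Type*} [Fintype n] [DecidableEq n]

lemma sum_paths_eq_dotProduct_pow_mulVec [CommSemiring R] (A : Matrix n n R) (w f : n → R)
    (t : ℕ) :
    ∑ h : Fin (t + 1) → n,
        (w (h 0) * ∏ i : Fin t, A (h i.castSucc) (h i.succ)) * f (h (Fin.last t)) =
      w ⬝ᵥ A ^ t *ᵥ f := by
  induction t generalizing w with
  | zero =>
    rw [← (Equiv.funUnique (Fin 1) n).symm.sum_comp]
    simp [dotProduct]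
  | succ t ih =>
    rw [pow_succ', ← mulVec_mulVec, dotProduct_mulVec, ← ih,
      ← (Fin.consEquiv fun _ : Fin (t + 2) ↦ n).sum_comp, Fintype.sum_prod_type_right]
    refine Finset.sum_congr rfl fun h _ ↦ ?_
    simp only [Fin.consEquiv_apply, Fin.prod_univ_succ, Fin.castSucc_zero, Fin.cons_zero,
      ← Fin.succ_castSucc, Fin.cons_succ, ← Fin.succ_last, vecMul, dotProduct, Finset.sum_mul]
    exact Finset.sum_congr rfl fun x _ ↦ by ring

lemma hasSum_dotProduct_pow_mulVec [NormedCommRing R] [HasSummableGeomSeries (Matrix n n R)]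
    {B : Matrix n n R} (hB : ‖B‖ < 1) (w f : n → R) :
    HasSum (fun t : ℕ ↦ w ⬝ᵥ B ^ t *ᵥ f) (w ⬝ᵥ (1 - B)⁻¹ *ᵥ f) := by
  have hgeom : HasSum (fun t : ℕ ↦ B ^ t) (1 - B)⁻¹ := by
    rw [nonsing_inv_eq_ringInverse]
    exact hasSum_geom_series_inverse B hB
  have hcont : Continuous fun C : Matrix n n R ↦ w ⬝ᵥ C *ᵥ f := by fun_prop
  exact hgeom.map (AddMonoidHom.mk' (fun C ↦ w ⬝ᵥ C *ᵥ f)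
    fun C D ↦ by rw [add_mulVec, dotProduct_add]) hcont

lemma linfty_opNorm_le_one_of_mem_rowStochastic {A : Matrix n n ℝ}
    (hA : A ∈ rowStochastic ℝ n) : ‖A‖ ≤ 1 := by
  rw [linfty_opNorm_def]
  norm_cast
  refine Finset.sup_le fun i _ ↦ ?_
  rw [← NNReal.coe_le_coe]
  simp [abs_of_nonneg (nonneg_of_mem_rowStochastic hA), sum_row_of_mem_rowStochastic hA]

end Paths

section JointLaw

omit [DecidableEq S] [DecidableEq A]

variable {π : S → A → ℝ}

/-- The law of `(s, a)` when `s` has law `ν` and `a` has law `π(·|s)`; signed weights `ν` are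
allowed. -/
def jointLaw (ν : S → ℝ) (π : S → A → ℝ) : S × A → ℝ :=
  fun x ↦ ν x.1 * π x.1 x.2

lemma jointLaw_dotProduct (ν : S → ℝ) (π : S → A → ℝ) (f : S × A → ℝ) :
    jointLaw ν π ⬝ᵥ f = ∑ s, ν s * ∑ a, π s a * f (s, a) := by
  simp only [dotProduct, jointLaw, Fintype.sum_prod_type, Finset.mul_sum, mul_assoc]

lemma jointLaw_dotProduct_comp_fst (hπ : IsPolicy π) (ν v : S → ℝ) :
    jointLaw ν π ⬝ᵥ (v ∘ Prod.fst) = ν ⬝ᵥ v := by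
  rw [jointLaw_dotProduct]
  simp [dotProduct, ← Finset.sum_mul, hπ.2]

omit [Fintype S] [Fintype A] in
lemma jointLaw_add_smul (ν ν' : S → ℝ) (c : ℝ) (π : S → A → ℝ) :
    jointLaw (ν + c • ν') π = jointLaw ν π + c • jointLaw ν' π := by
  ext x
  simp only [jointLaw, Pi.add_apply, Pi.smul_apply, smul_eq_mul]
  ring

/-- The transition matrix of the state-action chain `(s_t, a_t)` under `π`. -/
def transition (M : MDP S A) (π : S → A → ℝ) : Matrix (S × A) (S × A) ℝ :=
  .of fun x ↦ jointLaw (M.p x.1 x.2) π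

lemma transition_mulVec_comp_fst (M : MDP S A) (hπ : IsPolicy π) (v : S → ℝ) (x : S × A) :
    (transition M π *ᵥ (v ∘ Prod.fst)) x = M.p x.1 x.2 ⬝ᵥ v :=
  jointLaw_dotProduct_comp_fst hπ (M.p x.1 x.2) v

lemma vecMul_transition (M : MDP S A) (π : S → A → ℝ) (w : S × A → ℝ) :
    w ᵥ* transition M π = jointLaw (fun s ↦ ∑ x, w x * M.p x.1 x.2 s) π := by
  ext y
  simp [vecMul, dotProduct, transition, jointLaw, Finset.sum_mul, mul_assoc]

end JointLaw

section Resolvent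

variable (M : MDP S A) {π : S → A → ℝ}

lemma transition_mem_rowStochastic (hπ : IsPolicy π) :
    transition M π ∈ rowStochastic ℝ (S × A) := by
  refine ⟨fun x y ↦ mul_nonneg (M.p_nonneg x.1 x.2 y.1) (hπ.1 y.1 y.2), ?_⟩
  ext x
  exact (transition_mulVec_comp_fst M hπ 1 x).trans
    ((dotProduct_one _).trans (M.p_sum_one x.1 x.2))

lemma norm_discounted_transition_lt_one (hπ : IsPolicy π) : ‖M.γ • transition M π‖ < 1 := by
  have hnorm := linfty_opNorm_le_one_of_mem_rowStochastic (transition_mem_rowStochastic M hπ)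
  calc ‖M.γ • transition M π‖ = M.γ * ‖transition M π‖ := by
        rw [norm_smul, Real.norm_of_nonneg M.γ_pos.le]
    _ ≤ M.γ := mul_le_of_le_one_right M.γ_pos.le hnorm
    _ < 1 := M.γ_lt_one

/-- The discounted Green kernel `∑ t, γ ^ t P ^ t` of the state-action chain, `P` being its
transition matrix. It is encoded as `(1 - γ P)⁻¹`, a genuine inverse when `π` is a policy. -/
noncomputable def resolvent (π : S → A → ℝ) : Matrix (S × A) (S × A) ℝ :=
  (1 - M.γ • transition M π)⁻¹

lemma isUnit_det_one_sub_discounted_transition (hπ : IsPolicy π) :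
    IsUnit (1 - M.γ • transition M π).det :=
  (isUnit_iff_isUnit_det _).mp
    (isUnit_one_sub_of_norm_lt_one (norm_discounted_transition_lt_one M hπ))

lemma resolvent_mulVec_sub_smul_transition_mulVec (hπ : IsPolicy π) (f : S × A → ℝ) :
    resolvent M π *ᵥ (f - M.γ • transition M π *ᵥ f) = f := by
  have hinv := nonsing_inv_mul _ (isUnit_det_one_sub_discounted_transition M hπ)
  have hf : f - M.γ • transition M π *ᵥ f = (1 - M.γ • transition M π) *ᵥ f := by
    rw [sub_mulVec, one_mulVec, smul_mulVec]
  rw [hf, mulVec_mulVec, resolvent, hinv, one_mulVec]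

lemma resolvent_mulVec_eq (hπ : IsPolicy π) (f : S × A → ℝ) :
    resolvent M π *ᵥ f = f + M.γ • transition M π *ᵥ (resolvent M π *ᵥ f) := by
  have hinv := mul_nonsing_inv _ (isUnit_det_one_sub_discounted_transition M hπ)
  have hres : resolvent M π = 1 + M.γ • transition M π * resolvent M π := by
    rwa [sub_mul, one_mul, sub_eq_iff_eq_add] at hinv
  conv_lhs => rw [hres, add_mulVec, one_mulVec, smul_mul, smul_mulVec, ← mulVec_mulVec]

lemma vecMul_resolvent_eq (hπ : IsPolicy π) (w : S × A → ℝ) :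
    w ᵥ* resolvent M π = w + M.γ • ((w ᵥ* resolvent M π) ᵥ* transition M π) := by
  have hinv := nonsing_inv_mul _ (isUnit_det_one_sub_discounted_transition M hπ)
  have hres : resolvent M π = 1 + resolvent M π * M.γ • transition M π := by
    rwa [mul_sub, mul_one, sub_eq_iff_eq_add] at hinv
  conv_lhs => rw [hres, vecMul_add, vecMul_one, Matrix.mul_smul, vecMul_smul, ← vecMul_vecMul]

lemma tsum_discounted_hist (hπ : IsPolicy π) (w f : S × A → ℝ) :
    ∑' t : ℕ, M.γ ^ t * ∑ h : Hist S A t,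
        (w (h 0) * ∏ i : Fin t, transition M π (h i.castSucc) (h i.succ)) * f (lastSA h) =
      w ⬝ᵥ resolvent M π *ᵥ f := by
  rw [resolvent, ← (hasSum_dotProduct_pow_mulVec
    (norm_discounted_transition_lt_one M hπ) w f).tsum_eq]
  refine tsum_congr fun t ↦ ?_
  rw [smul_pow, smul_mulVec, dotProduct_smul, smul_eq_mul, ← sum_paths_eq_dotProduct_pow_mulVec]
  rfl

lemma uncurry_Qval_eq_resolvent_mulVec (hπ : IsPolicy π) :
    uncurry (Qval M π) = resolvent M π *ᵥ uncurry M.r := by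
  ext ⟨s, a⟩
  rw [← single_one_dotProduct (s, a) (resolvent M π *ᵥ _), ← tsum_discounted_hist M hπ]
  simp only [Pi.single_apply]
  rfl

lemma ηval_eq_dotProduct_resolvent (hπ : IsPolicy π) :
    ηval M π = jointLaw M.μ0 π ⬝ᵥ resolvent M π *ᵥ uncurry M.r :=
  tsum_discounted_hist M hπ (jointLaw M.μ0 π) (uncurry M.r)

lemma ηval_eq_dotProduct_Vval (hπ : IsPolicy π) : ηval M π = M.μ0 ⬝ᵥ Vval M π := by
  rw [ηval_eq_dotProduct_resolvent M hπ, ← uncurry_Qval_eq_resolvent_mulVec M hπ,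
    jointLaw_dotProduct]
  rfl

lemma Qval_bellman (hπ : IsPolicy π) (s : S) (a : A) :
    Qval M π s a = M.r s a + M.γ * M.p s a ⬝ᵥ Vval M π := by
  have hfix := resolvent_mulVec_eq M hπ (uncurry M.r)
  rw [← uncurry_Qval_eq_resolvent_mulVec M hπ] at hfix
  have hnext : (transition M π *ᵥ uncurry (Qval M π)) (s, a) = M.p s a ⬝ᵥ Vval M π :=
    jointLaw_dotProduct (M.p s a) π (uncurry (Qval M π))
  simpa only [Pi.add_apply, Pi.smul_apply, smul_eq_mul, uncurry_apply_pair, hnext] using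
    congrFun hfix (s, a)

lemma dOcc_eq_dotProduct_resolvent (hπ : IsPolicy π) (s : S) :
    dOcc M π s =
      (1 - M.γ) * jointLaw M.μ0 π ⬝ᵥ resolvent M π *ᵥ (Pi.single s (1 : ℝ) ∘ Prod.fst) := by
  rw [← tsum_discounted_hist M hπ]
  simp only [Function.comp_apply, Pi.single_apply]
  rfl

lemma vecMul_resolvent_eq_jointLaw_dOcc (hπ : IsPolicy π) :
    jointLaw M.μ0 π ᵥ* resolvent M π = (1 - M.γ)⁻¹ • jointLaw (dOcc M π) π := by
  -- One step of the chain always ends by drawing an action from `π`, so the flow equation makes the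
  -- occupancy a joint law; its state weights are then read off on indicators of states.
  obtain ⟨ν, hν⟩ : ∃ ν, jointLaw M.μ0 π ᵥ* resolvent M π = jointLaw ν π := by
    rw [vecMul_resolvent_eq M hπ, vecMul_transition]
    exact ⟨_, (jointLaw_add_smul M.μ0 _ M.γ π).symm⟩
  have hdOcc : dOcc M π = (1 - M.γ) • ν := by
    ext s
    rw [dOcc_eq_dotProduct_resolvent M hπ, dotProduct_mulVec, hν,
      jointLaw_dotProduct_comp_fst hπ, dotProduct_single_one, Pi.smul_apply, smul_eq_mul]
  have hγ : 1 - M.γ ≠ 0 := (sub_pos.mpr M.γ_lt_one).ne'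
  ext x
  simp [hν, hdOcc, jointLaw, hγ, mul_assoc]

lemma sum_dOcc_mul_sum_eq_dotProduct_resolvent (hπ : IsPolicy π) (f : S × A → ℝ) :
    (1 - M.γ)⁻¹ * ∑ s, dOcc M π s * ∑ a, π s a * f (s, a) =
      jointLaw M.μ0 π ⬝ᵥ resolvent M π *ᵥ f := by
  rw [dotProduct_mulVec, vecMul_resolvent_eq_jointLaw_dOcc M hπ, smul_dotProduct,
    jointLaw_dotProduct, smul_eq_mul]

end Resolvent

section PerformanceDifference

variable (M : MDP S A) {π π' : S → A → ℝ}

lemma uncurry_Adv_eq (hπ : IsPolicy π) (hπ' : IsPolicy π') :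
    uncurry (Adv M π) = uncurry M.r -
      (Vval M π ∘ Prod.fst - M.γ • transition M π' *ᵥ (Vval M π ∘ Prod.fst)) := by
  ext ⟨s, a⟩
  simp only [uncurry_apply_pair, Adv, Qval_bellman M hπ, Pi.sub_apply, Pi.smul_apply, smul_eq_mul,
    transition_mulVec_comp_fst M hπ', Function.comp_apply]
  ring

theorem performance_difference (hπ : IsPolicy π) (hπ' : IsPolicy π') :
    ηval M π' - ηval M π =
      (1 - M.γ)⁻¹ * ∑ s, dOcc M π' s * ∑ a, π' s a * Adv M π s a := by
  have havg := sum_dOcc_mul_sum_eq_dotProduct_resolvent M hπ' (uncurry (Adv M π))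
  simp only [uncurry_apply_pair] at havg
  rw [havg, uncurry_Adv_eq M hπ hπ', mulVec_sub, resolvent_mulVec_sub_smul_transition_mulVec M hπ',
    dotProduct_sub, jointLaw_dotProduct_comp_fst hπ', ηval_eq_dotProduct_resolvent M hπ',
    ηval_eq_dotProduct_Vval M hπ]

lemma sum_mul_Adv (π : S → A → ℝ) (hπ' : IsPolicy π') (s : S) :
    ∑ a, π' s a * Adv M π s a = ∑ a, π' s a * Qval M π s a - Vval M π s := by
  simp [Adv, mul_sub, Finset.sum_sub_distrib, ← Finset.sum_mul, hπ'.2]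

lemma sum_mul_Adv_add_sum_Qval_sub_mul (hπ : IsPolicy π) (hπ' : IsPolicy π') (s : S) :
    ∑ a, π' s a * Adv M π s a + ∑ a, (Qval M π' s a - Qval M π s a) * (π' s a - π s a) =
      -∑ a, π s a * Adv M π' s a := by
  rw [sum_mul_Adv M π hπ', sum_mul_Adv M π' hπ]
  simp only [Vval, ← Finset.sum_sub_distrib, ← Finset.sum_add_distrib, ← Finset.sum_neg_distrib]
  exact Finset.sum_congr rfl fun a _ ↦ by ring

end PerformanceDifference

/-- Exact error of the surrogate objective (Lemma 5 / value difference decomposition):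
`η(π̃) − η(π) = L_π(π̃) + (1/(1−γ)) E_{s∼d^π} ∑_a (Q^{π̃}−Q^π)(s,a) (π̃−π)(a|s)`. -/
theorem value_difference_decomposition
    (M : MDP S A) (π π' : S → A → ℝ)
    (hπ : IsPolicy π) (hπ' : IsPolicy π') :
    ηval M π' - ηval M π =
      Lsur M π π' +
        (1 - M.γ)⁻¹ *
          ∑ s, dOcc M π s * ∑ a, (Qval M π' s a - Qval M π s a) * (π' s a - π s a) := by
  have hpd := performance_difference M hπ' hπ
  simp only [Lsur, ← mul_add, ← Finset.sum_add_distrib, sum_mul_Adv_add_sum_Qval_sub_mul M hπ hπ',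
    mul_neg, Finset.sum_neg_distrib, ← hpd, neg_sub]

end PolicyOpt
end

section
/- For any two policies π and π̃ and every state s ∈ S and action a ∈ A, E_{τ∼π̃}[ ∑_{t≥1} γ^{t−1} A^π(s_t, a_t) | s₀ = s, a₀ = a ] = (1/γ) · (Q^{π̃}(s,a) − Q^π(s,a)). -/
open scoped BigOperators

namespace PolicyOpt

variable {S A : Type*} [Fintype S] [Fintype A] [DecidableEq S] [DecidableEq A]

/-!
Let `P_π` be the transition operator on functions of state-action pairs. Discounted expectations
along trajectories are Neumann series of `γ P_π`, so `g` is the discounted sum of `f` exactly when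
it solves the Poisson equation `g - γ P_π g = f`. For `f = r` this is the Bellman equation
for `Q^π`. Since `V^π` depends on the state only, `P_π̃ V^π = P_π Q^π`, whence
`P_π̃ A^π = P_π̃ Q^π - P_π Q^π`. Subtracting the Bellman equations of `π̃` and `π` cancels the
reward and shows that `γ⁻¹ (Q^π̃ - Q^π)` solves the Poisson equation for `P_π̃ A^π`.
-/

section NeumannSeries

variable {𝕜 E : Type*} [NontriviallyNormedField 𝕜] [NormedAddCommGroup E] [NormedSpace 𝕜 E]
  [CompleteSpace E] {T : E →L[𝕜] E}

lemma hasSum_pow_apply (hT : ‖T‖ < 1) (y : E) :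
    HasSum (fun n : ℕ => (T ^ n) y) ((∑' n : ℕ, T ^ n) y) :=
  (summable_geometric_of_norm_lt_one hT).hasSum.mapL (ContinuousLinearMap.apply 𝕜 E y)

lemma hasSum_pow_apply_iff (hT : ‖T‖ < 1) {x y : E} :
    HasSum (fun n : ℕ => (T ^ n) y) x ↔ x - T x = y := by
  constructor
  · intro hx
    rw [hx.unique (hasSum_pow_apply hT y)]
    exact DFunLike.congr_fun (mul_neg_geom_series T hT) y
  · rintro rfl
    convert hasSum_pow_apply hT (x - T x)
    exact (DFunLike.congr_fun (geom_series_mul_neg T hT) x).symm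

end NeumannSeries

section TransitionOperator

omit [DecidableEq S] [DecidableEq A]

/-- The one-step transition operator `P_π` of the chain of state-action pairs:
`(P_π f)(s, a) = E[f(s', a')]` with `s' ∼ p(·|s,a)` and `a' ∼ π(·|s')`. It is defined for arbitrary
`π`, and is Markov when `π` is a policy. -/
noncomputable def transitionOp (M : MDP S A) (π : S → A → ℝ) : (S × A → ℝ) →L[ℝ] (S × A → ℝ) :=
  LinearMap.toContinuousLinearMap
    { toFun := fun f x => ∑ s', M.p x.1 x.2 s' * ∑ a', π s' a' * f (s', a')
      map_add' := fun f g => by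
        ext x
        simp only [Pi.add_apply, mul_add, Finset.sum_add_distrib]
      map_smul' := fun c f => by
        ext x
        simp only [Pi.smul_apply, smul_eq_mul, RingHom.id_apply, Finset.mul_sum, mul_left_comm c] }

lemma transitionOp_apply (M : MDP S A) (π : S → A → ℝ) (f : S × A → ℝ) (x : S × A) :
    transitionOp M π f x = ∑ s', M.p x.1 x.2 s' * ∑ a', π s' a' * f (s', a') := rfl

variable (M : MDP S A) {π : S → A → ℝ}

lemma norm_transitionOp_le_one (hπ : IsPolicy π) : ‖transitionOp M π‖ ≤ 1 := by
  refine ContinuousLinearMap.opNorm_le_bound _ zero_le_one fun f => ?_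
  rw [one_mul, pi_norm_le_iff_of_nonneg (norm_nonneg f)]
  intro x
  have hball := convex_closedBall (0 : ℝ) ‖f‖
  have hactions (s' : S) : ∑ a', π s' a' * f (s', a') ∈ Metric.closedBall 0 ‖f‖ :=
    hball.sum_mem (fun a' _ => hπ.1 s' a') (hπ.2 s')
      fun a' _ => mem_closedBall_zero_iff.2 (norm_le_pi_norm f (s', a'))
  exact mem_closedBall_zero_iff.1 <|
    hball.sum_mem (fun s' _ => M.p_nonneg x.1 x.2 s') (M.p_sum_one x.1 x.2) fun s' _ => hactions s'

lemma norm_discount_smul_transitionOp_lt_one (hπ : IsPolicy π) :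
    ‖M.γ • transitionOp M π‖ < 1 := by
  rw [norm_smul, Real.norm_of_nonneg M.γ_pos.le]
  exact (mul_le_of_le_one_right M.γ_pos.le (norm_transitionOp_le_one M hπ)).trans_lt M.γ_lt_one

lemma transitionOp_comp_fst (hπ : ∀ s, ∑ a, π s a = 1) (v : S → ℝ) (x : S × A) :
    transitionOp M π (v ∘ Prod.fst) x = ∑ s', M.p x.1 x.2 s' * v s' := by
  simp only [transitionOp_apply, Function.comp_apply, ← Finset.sum_mul, hπ, one_mul]

end TransitionOperator

section Trajectories

variable (M : MDP S A) (π : S → A → ℝ) (s : S) (a : A) (t : ℕ)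

lemma probFrom_snoc (h : Hist S A t) (y : S × A) :
    probFrom M π s a (t + 1) (Fin.snoc h y : Hist S A (t + 1)) =
      probFrom M π s a t h * (M.p (lastSA h).1 (lastSA h).2 y.1 * π y.1 y.2) := by
  have hzero : (Fin.snoc h y : Hist S A (t + 1)) 0 = h 0 :=
    Fin.snoc_castSucc (α := fun _ => S × A) y h 0
  simp only [probFrom, lastSA, Fin.prod_univ_castSucc, Fin.succ_castSucc, Fin.succ_last, hzero,
    Fin.snoc_castSucc (α := fun _ => S × A), Fin.snoc_last, mul_assoc]

lemma sum_probFrom_succ_mul (f : S × A → ℝ) :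
    ∑ h : Hist S A (t + 1), probFrom M π s a (t + 1) h * f (lastSA h) =
      ∑ h : Hist S A t, probFrom M π s a t h * transitionOp M π f (lastSA h) := by
  rw [← (Fin.snocEquiv fun _ : Fin (t + 2) => S × A).sum_comp, Fintype.sum_prod_type_right]
  refine Finset.sum_congr rfl fun h _ => ?_
  calc ∑ y, probFrom M π s a (t + 1) (Fin.snoc h y : Hist S A (t + 1)) *
        f (lastSA (Fin.snoc h y : Hist S A (t + 1)))
      = ∑ y : S × A, probFrom M π s a t h *
          (M.p (lastSA h).1 (lastSA h).2 y.1 * (π y.1 y.2 * f y)) := by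
        simp only [probFrom_snoc, lastSA, Fin.snoc_last, mul_assoc]
    _ = probFrom M π s a t h * transitionOp M π f (lastSA h) := by
        simp only [transitionOp_apply, ← Finset.mul_sum, Fintype.sum_prod_type]

lemma sum_probFrom_mul_eq_transitionOp_pow (f : S × A → ℝ) :
    ∑ h : Hist S A t, probFrom M π s a t h * f (lastSA h) = (transitionOp M π ^ t) f (s, a) := by
  induction t generalizing f with
  | zero =>
    rw [← (Equiv.funUnique (Fin 1) (S × A)).symm.sum_comp]
    simp [probFrom, lastSA]
  | succ t ih => rw [sum_probFrom_succ_mul, ih, pow_succ, mul_apply_eq_comp]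

lemma discount_pow_mul_sum_probFrom (f : S × A → ℝ) :
    M.γ ^ t * ∑ h : Hist S A t, probFrom M π s a t h * f (lastSA h) =
      ((M.γ • transitionOp M π) ^ t) f (s, a) := by
  rw [sum_probFrom_mul_eq_transitionOp_pow, smul_pow]
  rfl

end Trajectories

section PoissonEquation

variable (M : MDP S A) {π π' : S → A → ℝ}

lemma tsum_discounted_eq_of_poisson (hπ : IsPolicy π) {f g : S × A → ℝ}
    (hg : g - M.γ • transitionOp M π g = f) (s : S) (a : A) :
    ∑' t : ℕ, M.γ ^ t * ∑ h : Hist S A t, probFrom M π s a t h * f (lastSA h) = g (s, a) := by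
  have hsum := (hasSum_pow_apply_iff (norm_discount_smul_transitionOp_lt_one M hπ)).2 hg
  simp only [discount_pow_mul_sum_probFrom]
  exact (Pi.hasSum.1 hsum (s, a)).tsum_eq

lemma Qval_bellman_s8 (hπ : IsPolicy π) :
    Function.uncurry (Qval M π) - M.γ • transitionOp M π (Function.uncurry (Qval M π)) =
      Function.uncurry M.r := by
  have hnorm := norm_discount_smul_transitionOp_lt_one M hπ
  have hpoisson := (hasSum_pow_apply_iff hnorm).1 (hasSum_pow_apply hnorm (Function.uncurry M.r))
  have hQ : Function.uncurry (Qval M π) =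
      (∑' n : ℕ, (M.γ • transitionOp M π) ^ n) (Function.uncurry M.r) :=
    funext fun x => tsum_discounted_eq_of_poisson M hπ hpoisson x.1 x.2
  rwa [hQ]

lemma transitionOp_Adv (hπ' : ∀ s, ∑ a, π' s a = 1) :
    transitionOp M π' (Function.uncurry (Adv M π)) =
      transitionOp M π' (Function.uncurry (Qval M π)) -
        transitionOp M π (Function.uncurry (Qval M π)) := by
  have hAdv : Function.uncurry (Adv M π) =
      Function.uncurry (Qval M π) - Vval M π ∘ Prod.fst := rfl
  have hV : transitionOp M π' (Vval M π ∘ Prod.fst) =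
      transitionOp M π (Function.uncurry (Qval M π)) :=
    funext (transitionOp_comp_fst M hπ' (Vval M π))
  rw [hAdv, map_sub, hV]

lemma Qval_sub_Qval_poisson (hπ : IsPolicy π) (hπ' : IsPolicy π') :
    Function.uncurry (Qval M π') - Function.uncurry (Qval M π) -
        M.γ • transitionOp M π' (Function.uncurry (Qval M π') - Function.uncurry (Qval M π)) =
      M.γ • transitionOp M π' (Function.uncurry (Adv M π)) := by
  have hbellman := (Qval_bellman_s8 M hπ').trans (Qval_bellman_s8 M hπ).symm
  rw [transitionOp_Adv M hπ'.2, map_sub]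
  linear_combination (norm := module) hbellman

end PoissonEquation

/-- `E_{τ∼π̃}[∑_{t≥1} γ^{t−1} A^π(s_t,a_t) | s₀=s, a₀=a] = (Q^{π̃}(s,a) − Q^π(s,a))/γ`. -/
theorem expected_future_advantage_eq_Q_difference
    (M : MDP S A) (π π' : S → A → ℝ)
    (hπ : IsPolicy π) (hπ' : IsPolicy π') (s : S) (a : A) :
    (∑' t : ℕ, M.γ ^ t *
        ∑ h : Hist S A (t + 1),
          probFrom M π' s a (t + 1) h * Adv M π (lastSA h).1 (lastSA h).2) =
      M.γ⁻¹ * (Qval M π' s a - Qval M π s a) := by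
  set g := Function.uncurry (Qval M π') - Function.uncurry (Qval M π)
  have hpoisson : M.γ⁻¹ • g - M.γ • transitionOp M π' (M.γ⁻¹ • g) =
      transitionOp M π' (Function.uncurry (Adv M π)) := by
    rw [map_smul, smul_comm M.γ, ← smul_sub, Qval_sub_Qval_poisson M hπ hπ',
      inv_smul_smul₀ M.γ_pos.ne']
  calc _ = ∑' t : ℕ, M.γ ^ t * ∑ h : Hist S A t, probFrom M π' s a t h *
          transitionOp M π' (Function.uncurry (Adv M π)) (lastSA h) :=
        tsum_congr fun t => congrArg (M.γ ^ t * ·) <|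
          sum_probFrom_succ_mul M π' s a t (Function.uncurry (Adv M π))
    _ = M.γ⁻¹ * (Qval M π' s a - Qval M π s a) :=
        tsum_discounted_eq_of_poisson M hπ' hpoisson s a

end PolicyOpt
end
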